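/- All involutions of Ree(q) are conjugate in Ree(q), and every involution of Ree(q) fixes exactly q + 1 points of O. -/

import Mathlib

open Matrix

set_option linter.unusedSectionVars false

noncomputable section

namespace ReePaper

variable {F : Type*} [Field F] [Fintype F]

/-- The matrix `α(x)`. -/
def amat (t : ℕ) (x : F) : Matrix (Fin 7) (Fin 7) F :=
  !![1, x^t, 0, 0, -x^(3*t+1), -x^(3*t+2), x^(4*t+2);
     0, 1, x, x^(t+1), -x^(2*t+1), 0, -x^(3*t+2);
     0, 0, 1, x^t, -x^(2*t), 0, x^(3*t+1);
     0, 0, 0, 1, x^t, 0, 0;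
     0, 0, 0, 0, 1, -x, x^(t+1);
     0, 0, 0, 0, 0, 1, -x^t;
     0, 0, 0, 0, 0, 0, 1]

/-- The matrix `β(x)`. -/
def bmat (t : ℕ) (x : F) : Matrix (Fin 7) (Fin 7) F :=
  !![1, 0, -x^t, 0, -x, 0, -x^(t+1);
     0, 1, 0, x^t, 0, -x^(2*t), 0;
     0, 0, 1, 0, 0, 0, x;
     0, 0, 0, 1, 0, x^t, 0;
     0, 0, 0, 0, 1, 0, x^t;
     0, 0, 0, 0, 0, 1, 0;
     0, 0, 0, 0, 0, 0, 1]

/-- The matrix `γ(x)`. -/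
def cmat (t : ℕ) (x : F) : Matrix (Fin 7) (Fin 7) F :=
  !![1, 0, 0, -x^t, 0, -x, -x^(2*t);
     0, 1, 0, 0, -x^t, 0, x;
     0, 0, 1, 0, 0, x^t, 0;
     0, 0, 0, 1, 0, 0, -x^t;
     0, 0, 0, 0, 1, 0, 0;
     0, 0, 0, 0, 0, 1, 0;
     0, 0, 0, 0, 0, 0, 1]

/-- The diagonal matrix `h(λ)`. -/
def hmat (t : ℕ) (l : Fˣ) : Matrix (Fin 7) (Fin 7) F :=
  Matrix.diagonal ![((l ^ (t : ℤ) : Fˣ) : F), ((l ^ (1 - (t : ℤ)) : Fˣ) : F),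
    ((l ^ (2 * (t : ℤ) - 1) : Fˣ) : F), 1, ((l ^ (1 - 2 * (t : ℤ)) : Fˣ) : F),
    ((l ^ ((t : ℤ) - 1) : Fˣ) : F), ((l ^ (-(t : ℤ)) : Fˣ) : F)]

/-- The matrix `Υ`, the antidiagonal matrix with all entries `-1`. -/
def ups : Matrix (Fin 7) (Fin 7) F :=
  !![0, 0, 0, 0, 0, 0, -1;
     0, 0, 0, 0, 0, -1, 0;
     0, 0, 0, 0, -1, 0, 0;
     0, 0, 0, -1, 0, 0, 0;
     0, 0, -1, 0, 0, 0, 0;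
     0, -1, 0, 0, 0, 0, 0;
     -1, 0, 0, 0, 0, 0, 0]

/-- `S(a, b, c) = α(a) β(b) γ(c)`. -/
def Smat (t : ℕ) (a b c : F) : Matrix (Fin 7) (Fin 7) F :=
  amat t a * bmat t b * cmat t c

/-- The Ree group `Ree(q) = ⟨α(x), β(x), γ(x), h(λ), Υ⟩ ≤ GL(7, q)`. -/
def ReeGroup (t : ℕ) : Subgroup (GL (Fin 7) F) :=
  Subgroup.closure {g : GL (Fin 7) F |
    (∃ x : F, (g : Matrix (Fin 7) (Fin 7) F) = amat t x) ∨
    (∃ x : F, (g : Matrix (Fin 7) (Fin 7) F) = bmat t x) ∨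
    (∃ x : F, (g : Matrix (Fin 7) (Fin 7) F) = cmat t x) ∨
    (∃ l : Fˣ, (g : Matrix (Fin 7) (Fin 7) F) = hmat t l) ∨
    (g : Matrix (Fin 7) (Fin 7) F) = ups}

/-- The subgroup `U(q) = ⟨α(x), β(x), γ(x)⟩`. -/
def Usub (t : ℕ) : Subgroup (GL (Fin 7) F) :=
  Subgroup.closure {g : GL (Fin 7) F |
    (∃ x : F, (g : Matrix (Fin 7) (Fin 7) F) = amat t x) ∨
    (∃ x : F, (g : Matrix (Fin 7) (Fin 7) F) = bmat t x) ∨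
    (∃ x : F, (g : Matrix (Fin 7) (Fin 7) F) = cmat t x)}

/-- The subgroup `H(q) = {h(λ) : λ ∈ F_q^×}`. -/
def Hsub (t : ℕ) : Subgroup (GL (Fin 7) F) :=
  Subgroup.closure {g : GL (Fin 7) F |
    ∃ l : Fˣ, (g : Matrix (Fin 7) (Fin 7) F) = hmat t l}

/-- The right action of an element of `GL(7, F)` on the projective space `P^6(F)`
of the row vector space `F^7`. -/
def ptAct (g : GL (Fin 7) F) (P : Projectivization F (Fin 7 → F)) :
    Projectivization F (Fin 7 → F) :=
  Projectivization.map (Matrix.vecMulLinear (g : Matrix (Fin 7) (Fin 7) F))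
    (by
      intro u v huv
      simp only [Matrix.vecMulLinear_apply] at huv
      have h2 : u ᵥ* ((g : Matrix (Fin 7) (Fin 7) F) * ((g⁻¹ : GL (Fin 7) F) : Matrix (Fin 7) (Fin 7) F))
          = v ᵥ* ((g : Matrix (Fin 7) (Fin 7) F) * ((g⁻¹ : GL (Fin 7) F) : Matrix (Fin 7) (Fin 7) F)) := by
        rw [← Matrix.vecMul_vecMul, ← Matrix.vecMul_vecMul, huv]
      rwa [g.mul_inv, Matrix.vecMul_one, Matrix.vecMul_one] at h2) P

/-- The point `P∞ = (0 : 0 : 0 : 0 : 0 : 0 : 1)`. -/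
def Pinf : Projectivization F (Fin 7 → F) :=
  Projectivization.mk F ![0, 0, 0, 0, 0, 0, 1]
    (by
      intro h
      have h1 : (1 : F) = 0 := by
        have := congrFun h 6
        rwa [show (![0, 0, 0, 0, 0, 0, 1] : Fin 7 → F) 6 = 1 from rfl] at this
      exact one_ne_zero h1)

/-- The point `P0 = (1 : 0 : 0 : 0 : 0 : 0 : 0)`. -/
def Pzero : Projectivization F (Fin 7 → F) :=
  Projectivization.mk F ![1, 0, 0, 0, 0, 0, 0]
    (by intro h; have := congrFun h 0; simp at this)

/-- The representative vector of the point of `O` with parameters `a, b, c`. -/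
def oVec (t : ℕ) (a b c : F) : Fin 7 → F :=
  ![1, a^t, -b^t, (a*b)^t - c^t, -b - a^(3*t+1) - (a*c)^t,
    -c - (b*c)^t - a^(3*t+2) - a^t * b^(2*t),
    a^t * c - b^(t+1) + a^(4*t+2) - c^(2*t) - a^(3*t+1) * b^t - (a*b*c)^t]

lemma oVec_ne_zero (t : ℕ) (a b c : F) : oVec t a b c ≠ 0 := by
  intro h
  have h1 : (1 : F) = 0 := by
    have := congrFun h 0
    rwa [show oVec t a b c 0 = 1 from rfl] at this
  exact one_ne_zero h1

/-- The set `O ⊆ P^6(F_q)` on which `Ree(q)` acts doubly transitively. -/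
def Oset (t : ℕ) : Set (Projectivization F (Fin 7 → F)) :=
  {Pinf} ∪ {P | ∃ a b c : F, P = Projectivization.mk F (oVec t a b c) (oVec_ne_zero t a b c)}

end ReePaper


namespace ReePaper

variable {F : Type*} [Field F] [Fintype F]

/-- The arithmetic of `F` used below, with `t = 3 ^ m`. -/
structure TF (F : Type*) [Field F] (t : ℕ) : Prop where
  add : ∀ x y : F, (x + y) ^ t = x ^ t + y ^ t
  per : ∀ x : F, x ^ (3 * t * t) = x
  odd : Odd t
  ge : 3 ≤ t

lemma TF.ne {t : ℕ} (T : TF F t) : t ≠ 0 := by have := T.ge; omega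
lemma TF.neg {t : ℕ} (T : TF F t) (x : F) : (-x) ^ t = -x ^ t := T.odd.neg_pow x
lemma TF.sub {t : ℕ} (T : TF F t) (x y : F) : (x - y) ^ t = x ^ t - y ^ t := by
  rw [sub_eq_add_neg, T.add, T.neg, ← sub_eq_add_neg]
lemma TF.ts {t : ℕ} (T : TF F t) (x : F) : (x ^ t) ^ (3 * t) = x := by
  rw [← pow_mul]; convert T.per x using 2; ring
lemma TF.st {t : ℕ} (T : TF F t) (x : F) : (x ^ (3 * t)) ^ t = x := by
  rw [← pow_mul]; exact T.per x
lemma TF.inj {t : ℕ} (T : TF F t) {x y : F} (h : x ^ t = y ^ t) : x = y := by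
  rw [← T.ts x, ← T.ts y, h]
lemma TF.tadd {t : ℕ} [CharP F 3] (T : TF F t) (x y : F) :
    (x + y) ^ (3 * t) = x ^ (3 * t) + y ^ (3 * t) := by
  have : Fact (Nat.Prime 3) := ⟨Nat.prime_three⟩
  rw [mul_comm 3 t, pow_mul, pow_mul, pow_mul, T.add, add_pow_char]
lemma TF.todd {t : ℕ} (T : TF F t) : Odd (3 * t) := by
  have := T.odd; exact Odd.mul (by decide) this
lemma TF.tneg {t : ℕ} (T : TF F t) (x : F) : (-x) ^ (3 * t) = -x ^ (3 * t) := T.todd.neg_pow x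
lemma TF.tsub {t : ℕ} [CharP F 3] (T : TF F t) (x y : F) :
    (x - y) ^ (3 * t) = x ^ (3 * t) - y ^ (3 * t) := by
  rw [sub_eq_add_neg, T.tadd, T.tneg, ← sub_eq_add_neg]
lemma pow3t {t : ℕ} (x : F) : x ^ (3 * t) = (x ^ t) ^ 3 := by
  rw [← pow_mul, mul_comm]

/-- The vector `oVec` with the Frobenius powers as separate variables. -/
def oV (A B C a b c : F) : Fin 7 → F :=
  ![1, A, -B, A*B - C, -b - A^3*a - A*C, -c - B*C - A^3*a^2 - A*B^2,
    A*c - b*B + A^4*a^2 - C^2 - A^3*a*B - A*B*C]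

lemma oVec_eq (t : ℕ) (a b c : F) : oVec t a b c = oV (a^t) (b^t) (c^t) a b c := by
  unfold oVec oV
  congr 1
  ext i
  fin_cases i <;> simp <;> ring

/-- The vectors representing points of `O`. -/
def InO (t : ℕ) (v : Fin 7 → F) : Prop :=
  (∃ k : F, k ≠ 0 ∧ v = k • ![0,0,0,0,0,0,1]) ∨
  ∃ k a b c : F, k ≠ 0 ∧ v = k • oVec t a b c

/-- Reversal of coordinates. -/
def rev7 (v : Fin 7 → F) : Fin 7 → F := ![v 6, v 5, v 4, v 3, v 2, v 1, v 0]

/-- Equations satisfied by the Ree-Tits ovoid. -/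
def Sat (v w : Fin 7 → F) : Prop :=
  v 3^2 + v 2*v 4 + v 1*v 5 + v 0*v 6 = 0 ∧
  v 0^3*w 2 - v 0^2*v 4*w 0 + v 0*v 1*v 3*w 0 - v 1^3*w 1 + v 1^2*v 2*w 0 = 0 ∧
  v 0^3*w 3 + v 0^2*v 4*w 1 - v 0^2*v 5*w 0 - v 0*v 1*v 3*w 1 - v 0*v 2*v 3*w 0
    - v 1^2*v 2*w 1 + v 1*v 2^2*w 0 = 0 ∧
  -(v 0^2*v 4*w 4) + v 0*v 1*v 3*w 4 + v 0*v 4*v 5*w 1 + v 1^2*v 2*w 4 + v 1*v 2*v 6*w 1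
    - v 1*v 3*v 5*w 1 + v 2^3*w 2 + v 2*v 3*v 4*w 1 = 0

lemma sat_oV [CharP F 3] (A B C a b c : F) :
    Sat (oV A B C a b c) (oV a b c (A^3) (B^3) (C^3)) := by
  refine ⟨?_, ?_, ?_, ?_⟩ <;> simp [oV] <;> grind

set_option maxHeartbeats 2000000 in
lemma sat_rev_oV [CharP F 3] (A B C a b c : F) :
    Sat (rev7 (oV A B C a b c)) (rev7 (oV a b c (A^3) (B^3) (C^3))) := by
  refine ⟨?_, ?_, ?_, ?_⟩ <;> simp [oV, rev7] <;> grind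

lemma tau_oV {t : ℕ} [CharP F 3] (T : TF F t) (a b c : F) :
    (fun i => oVec t a b c i ^ (3*t)) = oV a b c ((a^t)^3) ((b^t)^3) ((c^t)^3) := by
  have h0 : 3 * t ≠ 0 := by have := T.ne; omega
  rw [oVec_eq]
  have e : ∀ (x : F) (n : ℕ), (x^n)^(3*t) = (x^(3*t))^n := fun x n => by
    rw [← pow_mul, ← pow_mul, mul_comm]
  have ha := T.ts a
  have hb := T.ts b
  have hc := T.ts c
  have ha' := pow3t (t := t) a
  have hb' := pow3t (t := t) b
  have hc' := pow3t (t := t) c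
  generalize a ^ t = A at *
  generalize b ^ t = B at *
  generalize c ^ t = C at *
  ext i
  fin_cases i <;> simp [oV, T.tadd, T.tsub, T.tneg, mul_pow, e, ha, hb, hc, ha', hb', hc']

lemma inO_of_sat_aux {t : ℕ} [CharP F 3] (T : TF F t) (v : Fin 7 → F) (h1 : v 0 = 1)
    (h : Sat v (fun i => v i ^ (3*t))) : InO t v := by
  obtain ⟨q, e1, e7, -⟩ := h
  refine Or.inr ⟨1, v 1 ^ (3*t), (-v 2) ^ (3*t), (v 1 * (-v 2) - v 3)^(3*t), one_ne_zero, ?_⟩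
  rw [one_smul, oVec_eq]
  simp only [T.st]
  simp only [h1, one_pow, one_mul, mul_one] at q e1 e7
  rw [T.tsub, mul_pow, T.tneg]
  generalize v 1 ^ (3*t) = w1 at *
  generalize v 2 ^ (3*t) = w2 at *
  generalize v 3 ^ (3*t) = w3 at *
  have h4 : v 4 = w2 + v 1 * v 3 - v 1^3*w1 + v 1^2*v 2 := by linear_combination -e1
  have h5 : v 5 = w3 + v 4 * w1 - v 1*v 3*w1 - v 2*v 3 - v 1^2*v 2*w1+v 1*v 2^2 := by
    linear_combination -e7
  have h6 : v 6 = -(v 3^2 + v 2*v 4+v 1*v 5) := by linear_combination q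
  ext i
  fin_cases i
  · simpa [oV] using h1
  · simp [oV]
  · simp [oV]
  · simp [oV]
  · simp [oV]; grind
  · simp [oV]; grind
  · simp [oV]; grind

lemma InO.smul {t : ℕ} {v : Fin 7 → F} (h : InO t v) {k : F} (hk : k ≠ 0) : InO t (k • v) := by
  rcases h with ⟨l, hl, rfl⟩ | ⟨l, a, b, c, hl, rfl⟩
  · exact Or.inl ⟨k * l, mul_ne_zero hk hl, by rw [smul_smul]⟩
  · exact Or.inr ⟨k * l, a, b, c, mul_ne_zero hk hl, by rw [smul_smul]⟩

lemma Sat.smul {v w : Fin 7 → F} (h : Sat v w) (k l : F) : Sat (k • v) (l • w) := by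
  obtain ⟨h1, h2, h3, h4⟩ := h
  refine ⟨?_, ?_, ?_, ?_⟩ <;> simp only [Pi.smul_apply, smul_eq_mul]
  · linear_combination k^2 * h1
  · linear_combination k^3 * l * h2
  · linear_combination k^3 * l * h3
  · linear_combination k^3 * l * h4

lemma inO_of_sat {t : ℕ} [CharP F 3] (T : TF F t) (v : Fin 7 → F) (hv : v ≠ 0)
    (h : Sat v (fun i => v i ^ (3*t)))
    (h' : Sat (rev7 v) (rev7 (fun i => v i ^ (3*t)))) : InO t v := by
  have h0 : 3 * t ≠ 0 := by have := T.ne; omega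
  by_cases hz : v 0 = 0
  · left
    obtain ⟨q, e1, e7, f3⟩ := h
    obtain ⟨q', e1', e7', f3'⟩ := h'
    simp only [rev7] at q' e1' e7' f3'
    have z1 : v 1 = 0 := by
      simp [hz, h0] at e1
      simpa using e1
    have z2 : v 2 = 0 := by
      simp [hz, z1, h0] at f3
      simpa using f3
    have z3 : v 3 = 0 := by
      simp [hz, z1, z2] at q
      simpa using q
    have z4 : v 4 = 0 := by
      simp [hz, z1, z2, z3, h0] at f3'
      simpa using f3'
    have z5 : v 5 = 0 := by
      simp [hz, z1, z2, z3, z4, h0] at e1'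
      simpa using e1'
    refine ⟨v 6, ?_, ?_⟩
    · intro z6
      apply hv
      ext i
      fin_cases i <;> assumption
    · ext i
      fin_cases i <;> simp <;> assumption
  · have hk : (v 0)⁻¹ ≠ 0 := inv_ne_zero hz
    have := inO_of_sat_aux T ((v 0)⁻¹ • v) (by simp [hz]) (by
      have e : (fun i => ((v 0)⁻¹ • v) i ^ (3*t)) =
          ((v 0)⁻¹ ^ (3*t)) • (fun i => v i ^ (3*t)) := by
        ext i; simp [mul_pow]
      rw [e]; exact h.smul _ _)
    have h2 := this.smul hz
    rwa [smul_smul, mul_inv_cancel₀ hz, one_smul] at h2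

lemma rev7_rev7 (v : Fin 7 → F) : rev7 (rev7 v) = v := by
  ext i; fin_cases i <;> rfl

lemma rev7_smul (k : F) (v : Fin 7 → F) : rev7 (k • v) = k • rev7 v := by
  ext i; fin_cases i <;> rfl

lemma inO_rev {t : ℕ} [CharP F 3] (T : TF F t) {v : Fin 7 → F} (h : InO t v) :
    InO t (rev7 v) := by
  rcases h with ⟨l, hl, rfl⟩ | ⟨l, a, b, c, hl, rfl⟩
  · rw [rev7_smul]
    refine Or.inr ⟨l, 0, 0, 0, hl, ?_⟩
    congr 1
    ext i; fin_cases i <;> simp [rev7, oVec, T.ne]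
  · rw [rev7_smul]
    refine InO.smul ?_ hl
    have e : (fun i => rev7 (oVec t a b c) i ^ (3*t)) =
        rev7 (oV a b c ((a^t)^3) ((b^t)^3) ((c^t)^3)) := by
      rw [← tau_oV T]; ext i; fin_cases i <;> rfl
    apply inO_of_sat T
    · intro h
      have := congrFun h 6
      simp [rev7, oVec] at this
    · rw [e, oVec_eq]; exact sat_rev_oV _ _ _ _ _ _
    · rw [e, rev7_rev7, rev7_rev7, oVec_eq]; exact sat_oV _ _ _ _ _ _

lemma vecMul_ups (v : Fin 7 → F) : v ᵥ* (ups : Matrix (Fin 7) (Fin 7) F) = (-1 : F) • rev7 v := by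
  ext i
  fin_cases i <;> simp [ups, rev7, Matrix.vecMul, dotProduct, Fin.sum_univ_seven]

/-- A matrix preserves `O`. -/
def Pres (t : ℕ) (M : Matrix (Fin 7) (Fin 7) F) : Prop := ∀ v, InO t v → InO t (v ᵥ* M)

lemma pres_ups {t : ℕ} [CharP F 3] (T : TF F t) : Pres t (ups : Matrix (Fin 7) (Fin 7) F) := by
  intro v hv
  rw [vecMul_ups]
  exact (inO_rev T hv).smul (by simp)

end ReePaper

namespace ReePaper

variable {F : Type*} [Field F] [Fintype F]

/-- `α` with the Frobenius power as a separate variable. -/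
def aM (X x : F) : Matrix (Fin 7) (Fin 7) F :=
  !![1, X, 0, 0, -(X^3*x), -(X^3*x^2), X^4*x^2;
     0, 1, x, X*x, -(X^2*x), 0, -(X^3*x^2);
     0, 0, 1, X, -X^2, 0, X^3*x;
     0, 0, 0, 1, X, 0, 0;
     0, 0, 0, 0, 1, -x, X*x;
     0, 0, 0, 0, 0, 1, -X;
     0, 0, 0, 0, 0, 0, 1]

/-- `β` with the Frobenius power as a separate variable. -/
def bM (X x : F) : Matrix (Fin 7) (Fin 7) F :=
  !![1, 0, -X, 0, -x, 0, -(X*x);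
     0, 1, 0, X, 0, -X^2, 0;
     0, 0, 1, 0, 0, 0, x;
     0, 0, 0, 1, 0, X, 0;
     0, 0, 0, 0, 1, 0, X;
     0, 0, 0, 0, 0, 1, 0;
     0, 0, 0, 0, 0, 0, 1]

/-- `γ` with the Frobenius power as a separate variable. -/
def cM (X x : F) : Matrix (Fin 7) (Fin 7) F :=
  !![1, 0, 0, -X, 0, -x, -X^2;
     0, 1, 0, 0, -X, 0, x;
     0, 0, 1, 0, 0, X, 0;
     0, 0, 0, 1, 0, 0, -X;
     0, 0, 0, 0, 1, 0, 0;
     0, 0, 0, 0, 0, 1, 0;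
     0, 0, 0, 0, 0, 0, 1]

/-- `h` in the two parameters `p = l^(1-t)`, `s = l^(2t-1)`. -/
def dM (p s : F) : Matrix (Fin 7) (Fin 7) F :=
  Matrix.diagonal ![p*s, p, s, 1, s⁻¹, p⁻¹, (p*s)⁻¹]

lemma amat_eq (t : ℕ) (x : F) : amat t x = aM (x^t) x := by
  unfold amat aM
  have h1 : x^(3*t+1) = (x^t)^3*x := by ring
  have h2 : x^(3*t+2) = (x^t)^3*x^2 := by ring
  have h3 : x^(4*t+2) = (x^t)^4*x^2 := by ring
  have h4 : x^(t+1) = x^t*x := by ring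
  have h5 : x^(2*t+1) = (x^t)^2*x := by ring
  have h6 : x^(2*t) = (x^t)^2 := by ring
  rw [h1, h2, h3, h4, h5, h6]

lemma bmat_eq (t : ℕ) (x : F) : bmat t x = bM (x^t) x := by
  unfold bmat bM
  have h4 : x^(t+1) = x^t*x := by ring
  have h6 : x^(2*t) = (x^t)^2 := by ring
  rw [h4, h6]

lemma cmat_eq (t : ℕ) (x : F) : cmat t x = cM (x^t) x := by
  unfold cmat cM
  have h6 : x^(2*t) = (x^t)^2 := by ring
  rw [h6]

lemma hmat_eq (t : ℕ) (l : Fˣ) : hmat t l =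
    dM ((l ^ (1 - (t : ℤ)) : Fˣ) : F) ((l ^ (2 * (t : ℤ) - 1) : Fˣ) : F) := by
  unfold hmat dM
  congr 1
  have h1 : l ^ (t : ℤ) = l ^ (1 - (t : ℤ)) * l ^ (2 * (t : ℤ) - 1) := by
    rw [← _root_.zpow_add]; congr 1; ring
  have h2 : l ^ (1 - 2 * (t : ℤ)) = (l ^ (2 * (t : ℤ) - 1))⁻¹ := by
    rw [← _root_.zpow_neg]; congr 1; ring
  have h3 : l ^ ((t : ℤ) - 1) = (l ^ (1 - (t : ℤ)))⁻¹ := by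
    rw [← _root_.zpow_neg]; congr 1; ring
  have h4 : l ^ (-(t : ℤ)) = (l ^ (1 - (t : ℤ)) * l ^ (2 * (t : ℤ) - 1))⁻¹ := by
    rw [← h1, _root_.zpow_neg]
  rw [h4, h3, h2, h1]
  simp only [Units.val_mul, Units.val_inv_eq_inv_val]

/-- The explicit form of a row vector times a matrix. -/
lemma vm (v : Fin 7 → F) (M : Matrix (Fin 7) (Fin 7) F) : v ᵥ* M = fun j =>
    v 0 * M 0 j + v 1 * M 1 j + v 2 * M 2 j + v 3 * M 3 j + v 4 * M 4 j + v 5 * M 5 j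
      + v 6 * M 6 j := by
  ext j
  simp [Matrix.vecMul, dotProduct, Fin.sum_univ_seven]

lemma oV_aM [CharP F 3] (A B C a b c X x : F) :
    oV A B C a b c ᵥ* aM X x = oV (A + X) (B - A*x) (C - A^2*x - X*B + A*X*x)
      (a + x) (b - a*X^3) (c - a^2*X^3 - x*b + a*x*X^3) := by
  rw [vm]
  ext j
  fin_cases j <;> simp [oV, aM] <;> grind

lemma oV_bM [CharP F 3] (A B C a b c X x : F) :
    oV A B C a b c ᵥ* bM X x = oV A (B + X) C a (b + x) c := by
  rw [vm]
  ext j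
  fin_cases j <;> simp [oV, bM] <;> grind

lemma oV_cM [CharP F 3] (A B C a b c X x : F) :
    oV A B C a b c ᵥ* cM X x = oV A B (C + X) a b (c + x) := by
  rw [vm]
  ext j
  fin_cases j <;> simp [oV, cM] <;> grind

lemma pres_of {t : ℕ} {M : Matrix (Fin 7) (Fin 7) F}
    (h7 : InO t (![0,0,0,0,0,0,1] ᵥ* M)) (h : ∀ a b c, InO t (oVec t a b c ᵥ* M)) : Pres t M := by
  rintro v (⟨l, hl, rfl⟩ | ⟨l, a, b, c, hl, rfl⟩)
  · rw [Matrix.smul_vecMul]; exact h7.smul hl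
  · rw [Matrix.smul_vecMul]; exact (h a b c).smul hl

lemma inO_oVec (t : ℕ) (a b c : F) : InO t (oVec t a b c) :=
  Or.inr ⟨1, a, b, c, one_ne_zero, by rw [one_smul]⟩

lemma inO_inf (t : ℕ) : InO t (![0,0,0,0,0,0,1] : Fin 7 → F) :=
  Or.inl ⟨1, one_ne_zero, by rw [one_smul]⟩

lemma inf_aM (X x : F) : ![0,0,0,0,0,0,1] ᵥ* aM X x = ![0,0,0,0,0,0,1] := by
  rw [vm]; ext j; fin_cases j <;> simp [aM]
lemma inf_bM (X x : F) : ![0,0,0,0,0,0,1] ᵥ* bM X x = ![0,0,0,0,0,0,1] := by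
  rw [vm]; ext j; fin_cases j <;> simp [bM]
lemma inf_cM (X x : F) : ![0,0,0,0,0,0,1] ᵥ* cM X x = ![0,0,0,0,0,0,1] := by
  rw [vm]; ext j; fin_cases j <;> simp [cM]

lemma oVec_amat {t : ℕ} [CharP F 3] (T : TF F t) (a b c x : F) : oVec t a b c ᵥ* amat t x =
    oVec t (a + x) (b - a*(x^t)^3) (c - a^2*(x^t)^3 - x*b + a*x*(x^t)^3) := by
  have e : ((x^t)^3)^t = x := by rw [← pow3t, T.st]
  have e2 : ∀ y : F, (y^2)^t = (y^t)^2 := fun y => by rw [← pow_mul, ← pow_mul, mul_comm]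
  rw [amat_eq, oVec_eq, oV_aM, oVec_eq]
  simp only [T.add, T.sub, mul_pow, e, e2]

lemma oVec_bmat {t : ℕ} [CharP F 3] (T : TF F t) (a b c x : F) : oVec t a b c ᵥ* bmat t x =
    oVec t a (b + x) c := by
  rw [bmat_eq, oVec_eq, oV_bM, oVec_eq, T.add]

lemma oVec_cmat {t : ℕ} [CharP F 3] (T : TF F t) (a b c x : F) : oVec t a b c ᵥ* cmat t x =
    oVec t a b (c + x) := by
  rw [cmat_eq, oVec_eq, oV_cM, oVec_eq, T.add]

lemma pres_amat {t : ℕ} [CharP F 3] (T : TF F t) (x : F) : Pres t (amat t x) :=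
  pres_of (by rw [amat_eq, inf_aM]; exact inO_inf t)
    (fun a b c => by rw [oVec_amat T]; exact inO_oVec _ _ _ _)

lemma pres_bmat {t : ℕ} [CharP F 3] (T : TF F t) (x : F) : Pres t (bmat t x) :=
  pres_of (by rw [bmat_eq, inf_bM]; exact inO_inf t)
    (fun a b c => by rw [oVec_bmat T]; exact inO_oVec _ _ _ _)

lemma pres_cmat {t : ℕ} [CharP F 3] (T : TF F t) (x : F) : Pres t (cmat t x) :=
  pres_of (by rw [cmat_eq, inf_cM]; exact inO_inf t)
    (fun a b c => by rw [oVec_cmat T]; exact inO_oVec _ _ _ _)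

lemma oVec_dM {t : ℕ} (p s p' s' : F) (hp : p ≠ 0) (hs : s ≠ 0)
    (hp' : p' ^ t = p) (hs' : s' ^ t = s) (h1 : p' = p * s^2) (h2 : s' = p * s⁻¹) (a b c : F) :
    oVec t a b c ᵥ* dM p s = (p*s) • oVec t (a * s'⁻¹) (b*p'⁻¹) (c*(p'*s')⁻¹) := by
  rw [oVec_eq, oVec_eq]
  simp only [mul_pow, inv_pow, hp', hs']
  subst h1 h2
  rw [vm]
  generalize a^t = A
  generalize b^t = B
  generalize c^t = C
  ext j
  fin_cases j <;> simp [oV, dM, Matrix.diagonal] <;> field_simp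


lemma hpar {t : ℕ} (T : TF F t) (l : Fˣ) :
    ((((l ^ (1 - (t : ℤ)))^(3*t) : Fˣ) : F) = ((l ^ (1 - (t : ℤ)) : Fˣ) : F) *
      ((l ^ (2 * (t : ℤ) - 1) : Fˣ) : F)^2) ∧
    ((((l ^ (2 * (t : ℤ) - 1))^(3*t) : Fˣ) : F) = ((l ^ (1 - (t : ℤ)) : Fˣ) : F) *
      ((l ^ (2 * (t : ℤ) - 1) : Fˣ) : F)⁻¹) := by
  have h : l ^ (3*(t:ℤ)*t) = l := by
    have := T.per (l : F)
    rw [← Units.val_pow_eq_pow_val, Units.val_inj] at this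
    exact_mod_cast this
  constructor
  · rw [← Units.val_pow_eq_pow_val, ← Units.val_mul, Units.val_inj]
    rw [← zpow_natCast, ← zpow_natCast, ← _root_.zpow_mul, ← _root_.zpow_mul, ← _root_.zpow_add]
    have : (1 - (t:ℤ)) * ((3*t : ℕ) : ℤ) = 3*t + -(3*(t:ℤ)*t) := by push_cast; ring
    rw [this, _root_.zpow_add, _root_.zpow_neg, h, ← _root_.zpow_neg_one, ← _root_.zpow_add]
    congr 1; push_cast; ring
  · rw [← Units.val_inv_eq_inv_val, ← Units.val_mul, Units.val_inj]
    rw [← zpow_natCast, ← _root_.zpow_mul, ← _root_.zpow_neg, ← _root_.zpow_add]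
    have : (2 * (t:ℤ) - 1) * ((3*t : ℕ) : ℤ) = (3*(t:ℤ)*t) + (3*(t:ℤ)*t) + -(3*t) := by
      push_cast; ring
    rw [this, _root_.zpow_add, _root_.zpow_add, h]
    nth_rewrite 1 2 [← zpow_one l]
    rw [← _root_.zpow_add, ← _root_.zpow_add]
    congr 1; push_cast; ring

lemma pres_hmat {t : ℕ} (T : TF F t) (l : Fˣ) : Pres t (hmat t l) := by
  obtain ⟨h1, h2⟩ := hpar T l
  rw [hmat_eq]
  have hp : ((l ^ (1 - (t : ℤ)) : Fˣ) : F) ≠ 0 := Units.ne_zero _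
  have hs : ((l ^ (2 * (t : ℤ) - 1) : Fˣ) : F) ≠ 0 := Units.ne_zero _
  rw [Units.val_pow_eq_pow_val] at h1 h2
  generalize ((l ^ (1 - (t : ℤ)) : Fˣ) : F) = p at *
  generalize ((l ^ (2 * (t : ℤ) - 1) : Fˣ) : F) = s at *
  refine pres_of ?_ fun a b c => ?_
  · have : ![0,0,0,0,0,0,1] ᵥ* dM p s = (p*s)⁻¹ • ![0,0,0,0,0,0,1] := by
      rw [vm]; ext j; fin_cases j <;> simp [dM]
    rw [this]
    exact (inO_inf t).smul (inv_ne_zero (mul_ne_zero hp hs))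
  · rw [oVec_dM p s (p^(3*t)) (s^(3*t)) hp hs (T.st p) (T.st s) h1 h2]
    exact (inO_oVec _ _ _ _).smul (mul_ne_zero hp hs)

/-- The invariant (octonion-type) product. -/
def pr (u v : Fin 7 → F) : Fin 7 → F :=
  ![(u 1*v 2 - u 2*v 1) - (u 0*v 3 - u 3*v 0),
    (u 0*v 4 - u 4*v 0) + (u 1*v 3 - u 3*v 1),
    (u 2*v 3 - u 3*v 2) - (u 0*v 5 - u 5*v 0),
    (u 2*v 4 - u 4*v 2) + (u 1*v 5 - u 5*v 1) - (u 0*v 6 - u 6*v 0),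
    (u 3*v 4 - u 4*v 3) - (u 1*v 6 - u 6*v 1),
    (u 2*v 6 - u 6*v 2) + (u 3*v 5 - u 5*v 3),
    (u 4*v 5 - u 5*v 4) - (u 3*v 6 - u 6*v 3)]

/-- A matrix preserves the product. -/
def Equi (M : Matrix (Fin 7) (Fin 7) F) : Prop := ∀ u v, pr (u ᵥ* M) (v ᵥ* M) = pr u v ᵥ* M

lemma equi_bM [CharP F 3] (X x : F) : Equi (bM X x) := by
  intro u v
  rw [vm, vm, vm]
  ext j
  fin_cases j <;> simp [pr, bM] <;> grind

lemma equi_cM [CharP F 3] (X x : F) : Equi (cM X x) := by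
  intro u v
  rw [vm, vm, vm]
  ext j
  fin_cases j <;> simp [pr, cM] <;> grind

set_option maxHeartbeats 2000000 in
lemma equi_aM [CharP F 3] (X x : F) : Equi (aM X x) := by
  intro u v
  rw [vm, vm, vm]
  ext j
  fin_cases j <;> simp [pr, aM] <;> grind

lemma equi_ups : Equi (ups : Matrix (Fin 7) (Fin 7) F) := by
  intro u v
  rw [vm, vm, vm]
  ext j
  fin_cases j <;> simp [pr, ups] <;> ring

lemma equi_dM {p s : F} (hp : p ≠ 0) (hs : s ≠ 0) : Equi (dM p s) := by
  intro u v
  rw [vm, vm, vm]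
  ext j
  fin_cases j <;> simp [pr, dM] <;> field_simp

lemma equi_hmat (t : ℕ) (l : Fˣ) : Equi (hmat t l) := by
  rw [hmat_eq]; exact equi_dM (Units.ne_zero _) (Units.ne_zero _)

end ReePaper

namespace ReePaper

variable {F : Type*} [Field F] [Fintype F]

lemma InO.sat {t : ℕ} [CharP F 3] (T : TF F t) {v : Fin 7 → F} (h : InO t v) :
    Sat v (fun i => v i ^ (3*t)) := by
  have h0 : 3 * t ≠ 0 := by have := T.ne; omega
  rcases h with ⟨l, hl, rfl⟩ | ⟨l, a, b, c, hl, rfl⟩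
  · simp [Sat, h0]
  · have e : (fun i => (l • oVec t a b c) i ^ (3*t)) =
        (l ^ (3*t)) • (fun i => oVec t a b c i ^ (3*t)) := by
      ext i; simp [mul_pow]
    rw [e, tau_oV T, oVec_eq]
    exact (sat_oV _ _ _ _ _ _).smul _ _

/-- Shape of the matrices in `G₂` that fix two opposite points. -/
lemma shape [CharP F 3] {M : Matrix (Fin 7) (Fin 7) F} (hM : Equi M) {k k' : F} (hk : k ≠ 0)
    (h0 : M 0 = ![k,0,0,0,0,0,0]) (h6 : M 6 = ![0,0,0,0,0,0,k']) :
    ∃ p q r s : F, k = p*s - q*r ∧ k * k' = 1 ∧ M =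
      !![k,0,0,0,0,0,0; 0,p,q,0,0,0,0; 0,r,s,0,0,0,0; 0,0,0,1,0,0,0;
        0,0,0,0,k'*p,-(k'*q),0; 0,0,0,0,-(k'*r),k'*s,0; 0,0,0,0,0,0,k'] := by
  have two : (2:F) ≠ 0 := by
    intro h
    have h3 : (3:F) = 0 := by exact_mod_cast CharP.cast_eq_zero F 3
    exact one_ne_zero (α := F) (by linear_combination h3 - h)
  have dbl : ∀ x : F, -x = x → x = 0 := by
    intro x hx
    have : 2 * x = 0 := by linear_combination -hx
    exact (mul_eq_zero.1 this).resolve_left two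
  have B : ∀ i j, pr (M i) (M j) = pr (Pi.single i 1) (Pi.single j 1) ᵥ* M := by
    intro i j
    rw [← hM, Matrix.single_one_vecMul, Matrix.single_one_vecMul]; rfl
  have r3 : M 3 = ![0,0,0,k*k',0,0,0] := by
    have h := B 0 6
    rw [h0, h6, vm] at h
    ext j
    have := congrFun h j
    fin_cases j <;> simp [pr] at this ⊢ <;> first | exact this | exact this.symm
  have kk : k * k' = 1 := by
    have h := B 0 3
    rw [h0, r3, vm] at h
    have := congrFun h 0
    simp [pr, h0] at this
    simpa [hk] using this
  rw [kk] at r3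
  have r12 : ∀ i : Fin 7, i = 1 ∨ i = 2 → ∃ p q, M i = ![0,p,q,0,0,0,0] := by
    intro i hi
    have h := B i 3
    have g := B 0 i
    have e1 : pr (Pi.single i 1) (Pi.single 3 1) = (Pi.single i 1 : Fin 7 → F) := by
      rcases hi with rfl | rfl <;> ext j <;> fin_cases j <;> simp [pr]
    have e2 : pr (Pi.single 0 1) (Pi.single i 1) = (0 : Fin 7 → F) := by
      rcases hi with rfl | rfl <;> ext j <;> fin_cases j <;> simp [pr]
    rw [e1, Matrix.single_one_vecMul, r3] at h
    rw [e2, Matrix.zero_vecMul, h0] at g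
    change _ = M i at h
    have a0 := congrFun h 0
    have a3 := congrFun h 3
    have a4 := congrFun h 4
    have a5 := congrFun h 5
    have a6 := congrFun g 3
    simp [pr] at a0 a3 a4 a5 a6
    refine ⟨M i 1, M i 2, ?_⟩
    ext j
    fin_cases j
    · exact dbl _ a0
    · rfl
    · rfl
    · simpa using a3.symm
    · exact dbl _ a4
    · exact dbl _ a5
    · simpa [hk] using a6
  obtain ⟨p, q, r1⟩ := r12 1 (Or.inl rfl)
  obtain ⟨r, s, r2⟩ := r12 2 (Or.inr rfl)
  have det : k = p*s - q*r := by
    have h := B 1 2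
    rw [r1, r2, vm] at h
    have := congrFun h 0
    simp [pr, h0] at this
    exact this.symm
  have r4 : M 4 = ![0,0,0,0,k'*p,-(k'*q),0] := by
    have h := B 1 6
    rw [r1, h6, vm] at h
    ext j
    have := congrFun h j
    fin_cases j <;> simp [pr] at this ⊢ <;>
      first | linear_combination this | linear_combination -this
  have r5 : M 5 = ![0,0,0,0,-(k'*r),k'*s,0] := by
    have h := B 2 6
    rw [r2, h6, vm] at h
    ext j
    have := congrFun h j
    fin_cases j <;> simp [pr] at this ⊢ <;>
      first | linear_combination this | linear_combination -this
  refine ⟨p, q, r, s, det, kk, ?_⟩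
  ext i j
  fin_cases i
  · exact congrFun h0 j
  · exact congrFun r1 j
  · exact congrFun r2 j
  · exact congrFun r3 j
  · exact congrFun r4 j
  · exact congrFun r5 j
  · exact congrFun h6 j

open Polynomial in
lemma indep {t : ℕ} (T : TF F t) (hc : Fintype.card F = 3*t*t) (c1 c2 c3 c4 : F)
    (h : ∀ a : F, c1*a + c2*a^(3*t) + c3*a^(3*t+1) + c4*a^(3*t+2) = 0) :
    c1 = 0 ∧ c3 = 0 ∧ c4 = 0 := by
  have ht := T.ge
  let P : F[X] := C c1 * X^1 + C c2 * X^(3*t) + C c3 * X^(3*t+1) + C c4 * X^(3*t+2)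
  have hd : P.natDegree ≤ 3*t+2 := by
    have e : ∀ (c : F) (n : ℕ), n ≤ 3*t+2 → (C c * X^n).natDegree ≤ 3*t+2 := fun c n hn =>
      (natDegree_C_mul_X_pow_le c n).trans hn
    refine natDegree_add_le_of_degree_le (natDegree_add_le_of_degree_le
      (natDegree_add_le_of_degree_le ?_ ?_) ?_) ?_ <;> apply e <;> omega
  have hP : P = 0 := by
    refine Polynomial.eq_zero_of_natDegree_lt_card_of_eval_eq_zero P
      (f := (id : F → F)) Function.injective_id (fun a => ?_) ?_
    · simpa [P] using h a
    · rw [hc]; nlinarith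
  have co : ∀ n, P.coeff n = 0 := fun n => by rw [hP]; simp
  have n1 : (1:ℕ) ≠ 3*t := by omega
  have n2 : (t:ℕ) ≠ 0 := by omega
  refine ⟨?_, ?_, ?_⟩
  · have := co 1
    simpa [P, coeff_X_pow, coeff_X, n1, n2] using this
  · have := co (3*t+1)
    simpa [P, coeff_X_pow, coeff_X, n1, n2, coeff_C] using this
  · have := co (3*t+2)
    simpa [P, coeff_X_pow, coeff_X, n1, n2] using this

lemma stab {t : ℕ} [CharP F 3] (T : TF F t) (hc : Fintype.card F = 3*t*t)
    {M : Matrix (Fin 7) (Fin 7) F} (hM : Equi M) (hO : Pres t M) {k k' : F} (hk : k ≠ 0)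
    (h0 : M 0 = ![k,0,0,0,0,0,0]) (h6 : M 6 = ![0,0,0,0,0,0,k']) :
    ∃ l : Fˣ, M = hmat t l := by
  obtain ⟨p, q, r, s, det, kk, hMe⟩ := shape hM hk h0 h6
  have h3t : 3 * t ≠ 0 := by have := T.ne; omega
  have ha : ∀ a : F, (k^3*q^(3*t))*a + (p^2*q*k^(3*t))*a^(3*t)
      + (k*p*k^(3*t) - p^3*p^(3*t))*a^(3*t+1) + (-(k*r*k^(3*t)))*a^(3*t+2) = 0 := by
    intro a
    have := (hO _ (inO_oVec t a 0 0)).sat T |>.2.1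
    rw [oVec_eq, vm, hMe] at this
    simp [oV, T.ne, mul_pow, T.ts] at this
    have e1 : a^(3*t+1) = (a^t)^3*a := by ring
    have e2 : a^(3*t+2) = (a^t)^3*a^2 := by ring
    have e3 : a^(3*t) = (a^t)^3 := by ring
    rw [e1, e2, e3]
    linear_combination this + (-((a^t)^3*a*p) + (a^t)^3*a^2*r)*k*k^(3*t) * kk
  obtain ⟨hq, hp, hr⟩ := indep T hc _ _ _ _ ha
  have hk3 : k^(3*t) ≠ 0 := pow_ne_zero _ hk
  have q0 : q = 0 := by simpa [hk, h3t, T.ne] using hq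
  have r0 : r = 0 := by simpa [hk, h3t, T.ne] using hr
  have hb := (hO _ (inO_oVec t 0 1 0)).sat T |>.2.1
  rw [oVec_eq, vm, hMe] at hb
  subst q0 r0
  simp [oV, T.ne, mul_pow, T.tneg] at hb
  have det' : k = p*s := by simpa using det
  subst det'
  have p0 : p ≠ 0 := left_ne_zero_of_mul hk
  have s0 : s ≠ 0 := right_ne_zero_of_mul hk
  rw [mul_pow p s (3*t)] at hp hb
  have P0 : p^(3*t) ≠ 0 := pow_ne_zero _ p0
  have S0 : s^(3*t) ≠ 0 := pow_ne_zero _ s0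
  have hs' : s * s^(3*t) = p := by
    apply mul_left_cancel₀ (mul_ne_zero (pow_ne_zero 2 p0) P0)
    linear_combination hp
  have hp' : p^(3*t) = p*s^2 := by
    apply mul_left_cancel₀ (mul_ne_zero (mul_ne_zero (pow_ne_zero 2 p0) s0) S0)
    linear_combination hb - (p*s)*p*p^(3*t)*s^(3*t)*kk
  let l : Fˣ := Units.mk0 (p^2*s) (mul_ne_zero (pow_ne_zero 2 p0) s0)
  have hl : (l : F)^t = p*s := by
    have : (l : F) = (p*s)^(3*t) := by
      rw [mul_pow, hp']
      show p^2*s = _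
      linear_combination (-p*s) * hs'
    rw [this, T.st]
  have hlt : l ^ (t:ℤ) = Units.mk0 (p*s) hk := by
    ext; simpa using hl
  refine ⟨l, ?_⟩
  have e1 : ((l ^ (1 - (t : ℤ)) : Fˣ) : F) = p := by
    rw [_root_.zpow_sub, hlt]
    simp [l]
    field_simp
  have e2 : ((l ^ (2*(t : ℤ) - 1) : Fˣ) : F) = s := by
    rw [_root_.zpow_sub, mul_comm 2 (t:ℤ), _root_.zpow_mul, hlt]
    simp [l]
    field_simp
  rw [hmat_eq, e1, e2, hMe]
  have e : k' = (p*s)⁻¹ := eq_inv_of_mul_eq_one_right kk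
  subst e
  ext i j
  fin_cases i <;> fin_cases j <;> simp [dM] <;> field_simp

end ReePaper

namespace ReePaper

variable {F : Type*} [Field F] [Fintype F]

lemma det_aM (X x : F) : (aM X x).det ≠ 0 := by
  rw [Matrix.det_of_isUpperTriangular]
  · simp [Fin.prod_univ_seven, aM]
  · intro i j h
    fin_cases i <;> fin_cases j <;> first | rfl | exact absurd h (by decide)
lemma det_bM (X x : F) : (bM X x).det ≠ 0 := by
  rw [Matrix.det_of_isUpperTriangular]
  · simp [Fin.prod_univ_seven, bM]
  · intro i j h
    fin_cases i <;> fin_cases j <;> first | rfl | exact absurd h (by decide)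
lemma det_cM (X x : F) : (cM X x).det ≠ 0 := by
  rw [Matrix.det_of_isUpperTriangular]
  · simp [Fin.prod_univ_seven, cM]
  · intro i j h
    fin_cases i <;> fin_cases j <;> first | rfl | exact absurd h (by decide)
lemma det_dM {p s : F} (hp : p ≠ 0) (hs : s ≠ 0) : (dM p s).det ≠ 0 := by
  rw [dM, Matrix.det_diagonal]
  simp [Fin.prod_univ_seven, hp, hs]

lemma ups_ups : (ups : Matrix (Fin 7) (Fin 7) F) * ups = 1 := by
  ext i j
  fin_cases i <;> fin_cases j <;> simp [ups, Matrix.mul_apply, Fin.sum_univ_seven]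

/-- `α(x)` as an element of `GL`. -/
def gA (t : ℕ) (x : F) : GL (Fin 7) F :=
  Matrix.GeneralLinearGroup.mkOfDetNeZero (amat t x) (by rw [amat_eq]; exact det_aM _ _)
/-- `β(x)` as an element of `GL`. -/
def gB (t : ℕ) (x : F) : GL (Fin 7) F :=
  Matrix.GeneralLinearGroup.mkOfDetNeZero (bmat t x) (by rw [bmat_eq]; exact det_bM _ _)
/-- `γ(x)` as an element of `GL`. -/
def gC (t : ℕ) (x : F) : GL (Fin 7) F :=
  Matrix.GeneralLinearGroup.mkOfDetNeZero (cmat t x) (by rw [cmat_eq]; exact det_cM _ _)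
/-- `h(l)` as an element of `GL`. -/
def gH (t : ℕ) (l : Fˣ) : GL (Fin 7) F :=
  Matrix.GeneralLinearGroup.mkOfDetNeZero (hmat t l)
    (by rw [hmat_eq]; exact det_dM (Units.ne_zero _) (Units.ne_zero _))
/-- `Υ` as an element of `GL`. -/
def gU : GL (Fin 7) F := ⟨ups, ups, ups_ups, ups_ups⟩

lemma gA_val (t : ℕ) (x : F) : (gA t x : Matrix (Fin 7) (Fin 7) F) = amat t x := rfl
lemma gB_val (t : ℕ) (x : F) : (gB t x : Matrix (Fin 7) (Fin 7) F) = bmat t x := rfl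
lemma gC_val (t : ℕ) (x : F) : (gC t x : Matrix (Fin 7) (Fin 7) F) = cmat t x := rfl
lemma gH_val (t : ℕ) (l : Fˣ) : (gH t l : Matrix (Fin 7) (Fin 7) F) = hmat t l := rfl
lemma gU_val : ((gU : GL (Fin 7) F) : Matrix (Fin 7) (Fin 7) F) = ups := rfl

lemma gA_mem (t : ℕ) (x : F) : gA t x ∈ ReeGroup (F := F) t :=
  Subgroup.subset_closure (Or.inl ⟨x, rfl⟩)
lemma gB_mem (t : ℕ) (x : F) : gB t x ∈ ReeGroup (F := F) t :=
  Subgroup.subset_closure (Or.inr (Or.inl ⟨x, rfl⟩))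
lemma gC_mem (t : ℕ) (x : F) : gC t x ∈ ReeGroup (F := F) t :=
  Subgroup.subset_closure (Or.inr (Or.inr (Or.inl ⟨x, rfl⟩)))
lemma gH_mem (t : ℕ) (l : Fˣ) : gH t l ∈ ReeGroup (F := F) t :=
  Subgroup.subset_closure (Or.inr (Or.inr (Or.inr (Or.inl ⟨l, rfl⟩))))
lemma gU_mem (t : ℕ) : gU ∈ ReeGroup (F := F) t :=
  Subgroup.subset_closure (Or.inr (Or.inr (Or.inr (Or.inr rfl))))

lemma Equi.mul {M N : Matrix (Fin 7) (Fin 7) F} (hM : Equi M) (hN : Equi N) : Equi (M * N) := by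
  intro u v
  rw [← Matrix.vecMul_vecMul, ← Matrix.vecMul_vecMul, hN, hM, Matrix.vecMul_vecMul]

lemma Pres.mul {t : ℕ} {M N : Matrix (Fin 7) (Fin 7) F} (hM : Pres t M) (hN : Pres t N) :
    Pres t (M * N) := by
  intro v hv
  rw [← Matrix.vecMul_vecMul]
  exact hN _ (hM _ hv)

lemma ree_inv {t : ℕ} [CharP F 3] (T : TF F t) {g : GL (Fin 7) F}
    (hg : g ∈ ReeGroup (F := F) t) :
    Equi (g : Matrix (Fin 7) (Fin 7) F) ∧ Pres t (g : Matrix (Fin 7) (Fin 7) F) := by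
  classical
  have : Finite (GL (Fin 7) F) := inferInstance
  have hg' : g ∈ (ReeGroup (F := F) t).toSubmonoid := hg
  rw [ReeGroup, Subgroup.closure_toSubmonoid_of_finite] at hg'
  induction hg' using Submonoid.closure_induction with
  | mem x hx =>
    rcases hx with ⟨y, hy⟩ | ⟨y, hy⟩ | ⟨y, hy⟩ | ⟨y, hy⟩ | hy <;> rw [hy]
    · exact ⟨by rw [amat_eq]; exact equi_aM _ _, pres_amat T y⟩
    · exact ⟨by rw [bmat_eq]; exact equi_bM _ _, pres_bmat T y⟩
    · exact ⟨by rw [cmat_eq]; exact equi_cM _ _, pres_cmat T y⟩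
    · exact ⟨equi_hmat t y, pres_hmat T y⟩
    · exact ⟨equi_ups, pres_ups T⟩
  | one =>
    exact ⟨fun u v => by simp, fun v hv => by simpa using hv⟩
  | mul x y hx hy ihx ihy =>
    have hx' : x ∈ ReeGroup (F := F) t := Subgroup.le_closure_toSubmonoid _ hx
    have hy' : y ∈ ReeGroup (F := F) t := Subgroup.le_closure_toSubmonoid _ hy
    rw [Matrix.GeneralLinearGroup.coe_mul]
    exact ⟨(ihx hx').1.mul (ihy hy').1, (ihx hx').2.mul (ihy hy').2⟩

/-- First basis vector. -/
def e1 : Fin 7 → F := ![1,0,0,0,0,0,0]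
/-- Last basis vector. -/
def e7 : Fin 7 → F := ![0,0,0,0,0,0,1]

lemma oVec_zero {t : ℕ} (T : TF F t) : oVec t (0:F) 0 0 = e1 := by
  ext i; fin_cases i <;> simp [oVec, e1, T.ne]

/-- The row action. -/
def act (v : Fin 7 → F) (g : GL (Fin 7) F) : Fin 7 → F := v ᵥ* (g : Matrix (Fin 7) (Fin 7) F)

lemma act_mul (v : Fin 7 → F) (g h : GL (Fin 7) F) : act v (g * h) = act (act v g) h := by
  simp [act, Matrix.vecMul_vecMul]
lemma act_one (v : Fin 7 → F) : act v 1 = v := by simp [act]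
lemma act_smul (k : F) (v : Fin 7 → F) (g : GL (Fin 7) F) : act (k • v) g = k • act v g :=
  Matrix.smul_vecMul _ _ _
lemma act_inv (v : Fin 7 → F) (g : GL (Fin 7) F) : act (act v g) g⁻¹ = v := by
  rw [← act_mul, mul_inv_cancel, act_one]
lemma act_inv' (v : Fin 7 → F) (g : GL (Fin 7) F) : act (act v g⁻¹) g = v := by
  rw [← act_mul, inv_mul_cancel, act_one]

lemma transU {t : ℕ} [CharP F 3] (T : TF F t) (a b c : F) : ∃ x ∈ ReeGroup (F := F) t,
    act e1 x = oVec t a b c ∧ act e7 x = e7 := by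
  refine ⟨gA t a * gB t b * gC t c,
    mul_mem (mul_mem (gA_mem t a) (gB_mem t b)) (gC_mem t c), ?_, ?_⟩
  · rw [act_mul, act_mul, ← oVec_zero T]
    simp only [act, gA_val, gB_val, gC_val]
    rw [oVec_amat T, oVec_bmat T, oVec_cmat T]
    simp
  · rw [act_mul, act_mul]
    simp only [act, gA_val, gB_val, gC_val, amat_eq, bmat_eq, cmat_eq, e7]
    rw [inf_aM, inf_bM, inf_cM]

lemma act_e7_gU : act (e7 : Fin 7 → F) gU = (-1 : F) • e1 := by
  rw [act, gU_val, vecMul_ups]; congr 1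
lemma act_e1_gU : act (e1 : Fin 7 → F) gU = (-1 : F) • e7 := by
  rw [act, gU_val, vecMul_ups]; congr 1

lemma trans2 {t : ℕ} [CharP F 3] (T : TF F t) {v w : Fin 7 → F} (hv : InO t v) (hw : InO t w)
    (hvw : ∀ k : F, k ≠ 0 → w ≠ k • v) : ∃ x ∈ ReeGroup (F := F) t,
    (∃ k : F, k ≠ 0 ∧ act e7 x = k • v) ∧ (∃ k : F, k ≠ 0 ∧ act e1 x = k • w) := by
  -- first step: move `v` to `e7`
  obtain ⟨y, hy, k, hk, hyv⟩ : ∃ y ∈ ReeGroup (F := F) t, ∃ k : F, k ≠ 0 ∧ act e7 y = k • v := by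
    rcases hv with ⟨l, hl, rfl⟩ | ⟨l, a, b, c, hl, rfl⟩
    · exact ⟨1, one_mem _, l⁻¹, inv_ne_zero hl, by
        rw [act_one, smul_smul, inv_mul_cancel₀ hl, one_smul]; rfl⟩
    · obtain ⟨x, hx, hx1, -⟩ := transU T a b c
      refine ⟨gU * x, mul_mem (gU_mem t) hx, -l⁻¹, by simpa using hl, ?_⟩
      rw [act_mul, act_e7_gU, act_smul, hx1, smul_smul]
      congr 1; field_simp
  have hw' : InO t (act w y⁻¹) := (ree_inv T (inv_mem hy)).2 w hw
  rcases hw' with ⟨l, hl, h⟩ | ⟨l, a, b, c, hl, h⟩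
  · exfalso
    apply hvw (l * k) (mul_ne_zero hl hk)
    rw [← act_inv' w y, h, act_smul]
    change l • act e7 y = _
    rw [hyv, smul_smul]
  · obtain ⟨x, hx, hx1, hx7⟩ := transU T a b c
    refine ⟨x * y, mul_mem hx hy, ⟨k, hk, ?_⟩, ⟨l⁻¹, inv_ne_zero hl, ?_⟩⟩
    · rw [act_mul, hx7, hyv]
    · rw [act_mul, hx1]
      have : oVec t a b c = l⁻¹ • act w y⁻¹ := by
        rw [h, smul_smul, inv_mul_cancel₀ hl, one_smul]
      rw [this, act_smul, act_inv']

lemma stabG {t : ℕ} [CharP F 3] (T : TF F t) (hc : Fintype.card F = 3*t*t) {g : GL (Fin 7) F}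
    (hg : g ∈ ReeGroup (F := F) t) {k k' : F} (hk : k ≠ 0) (h1 : act e1 g = k • e1)
    (h7 : act e7 g = k' • e7) : ∃ l : Fˣ, g = gH t l := by
  have a1 : act e1 g = (g : Matrix (Fin 7) (Fin 7) F) 0 := by
    rw [act, vm]; ext j; simp [e1]
  have a7 : act e7 g = (g : Matrix (Fin 7) (Fin 7) F) 6 := by
    rw [act, vm]; ext j; simp [e7]
  rw [h1] at a1
  rw [h7] at a7
  obtain ⟨l, hl⟩ := stab T hc (ree_inv T hg).1 (ree_inv T hg).2 (k := k) (k' := k') hk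
    (by rw [← a1]; simp [e1]) (by rw [← a7]; simp [e7])
  exact ⟨l, Units.ext hl⟩

lemma gH_mul (t : ℕ) (l l' : Fˣ) : gH t l * gH t l' = gH t (l * l') := by
  apply Units.ext
  rw [Matrix.GeneralLinearGroup.coe_mul, gH_val, gH_val, gH_val]
  unfold hmat
  rw [Matrix.diagonal_mul_diagonal]
  congr 1
  ext i
  fin_cases i <;> simp [mul_zpow, mul_pow, mul_comm]

lemma gH_one (t : ℕ) : gH t (1 : Fˣ) = 1 := by
  have := gH_mul t (1 : Fˣ) 1
  rw [mul_one] at this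
  exact mul_eq_left.1 this

set_option maxHeartbeats 1000000 in
lemma gU_gH (t : ℕ) (l : Fˣ) : gU * gH t l = gH t l⁻¹ * gU := by
  apply Units.ext
  rw [Matrix.GeneralLinearGroup.coe_mul, Matrix.GeneralLinearGroup.coe_mul, gH_val, gH_val, gU_val,
    hmat_eq, hmat_eq]
  simp only [_root_.inv_zpow]
  ext i j
  fin_cases i <;> fin_cases j <;> simp [ups, dM, Matrix.mul_apply, Fin.sum_univ_seven, mul_comm]

lemma gU_gU : (gU : GL (Fin 7) F) * gU = 1 := Units.ext ups_ups

/-- Every involution moves a point of `O`. -/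
lemma exists_moved {t : ℕ} [CharP F 3] (T : TF F t) (hc : Fintype.card F = 3*t*t)
    {g : GL (Fin 7) F} (hg : g ∈ ReeGroup (F := F) t) (h1 : g ≠ 1) :
    ∃ v, InO t v ∧ ∀ k : F, k ≠ 0 → act v g ≠ k • v := by
  by_contra! H
  have i1 : InO t (e1 : Fin 7 → F) := by rw [← oVec_zero T]; exact inO_oVec _ _ _ _
  have i7 : InO t (e7 : Fin 7 → F) := inO_inf t
  obtain ⟨k, hk, h⟩ := H _ i1
  obtain ⟨k', hk', h'⟩ := H _ i7
  obtain ⟨l, rfl⟩ := stabG T hc hg hk h h'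
  obtain ⟨r, hr, e⟩ := H _ (inO_oVec t 0 0 1)
  have c0 := congrFun e 0
  have c3 := congrFun e 3
  simp [act, gH_val, hmat, oVec, T.ne, Matrix.vecMul_diagonal] at c0 c3
  apply h1
  have : (l : F)^t = 1^t := by rw [c0, ← c3, one_pow]
  have := T.inj this
  rw [Units.val_eq_one.1 this, gH_one]

/-- Conjugacy in the Ree group. -/
def Cj (t : ℕ) (g h : GL (Fin 7) F) : Prop := ∃ x ∈ ReeGroup (F := F) t, g * x = x * h

lemma Cj.symm {t : ℕ} {g h : GL (Fin 7) F} : Cj t g h → Cj t h g := by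
  rintro ⟨x, hx, e⟩
  refine ⟨x⁻¹, inv_mem hx, ?_⟩
  rw [mul_inv_eq_iff_eq_mul, mul_assoc, e, inv_mul_cancel_left]

lemma Cj.trans {t : ℕ} {g h k : GL (Fin 7) F} : Cj t g h → Cj t h k → Cj t g k := by
  rintro ⟨x, hx, e⟩ ⟨y, hy, e'⟩
  exact ⟨x * y, mul_mem hx hy, by rw [← mul_assoc, e, mul_assoc, e', mul_assoc]⟩

lemma cj_swap {t : ℕ} [CharP F 3] (T : TF F t) (hc : Fintype.card F = 3*t*t)
    {g : GL (Fin 7) F} (hg : g ∈ ReeGroup (F := F) t) (h1 : g ≠ 1) (h2 : g * g = 1) :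
    ∃ l : Fˣ, Cj t g (gH t l * gU) := by
  obtain ⟨v, hv, hm⟩ := exists_moved T hc hg h1
  obtain ⟨x, hx, ⟨k, hk, e⟩, ⟨k', hk', e'⟩⟩ := trans2 T hv ((ree_inv T hg).2 v hv) hm
  change act e1 x = k' • act v g at e'
  have f7 : act v x⁻¹ = k⁻¹ • e7 := by
    rw [← act_inv e7 x, e, act_smul, smul_smul, inv_mul_cancel₀ hk, one_smul]
  have f1 : act (act v g) x⁻¹ = k'⁻¹ • e1 := by
    rw [← act_inv e1 x, e', act_smul, smul_smul, inv_mul_cancel₀ hk', one_smul]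
  have m7 : act e7 (x * g * x⁻¹ * gU) = (-(k * k'⁻¹)) • e7 := by
    rw [act_mul, act_mul, act_mul, e, act_smul, act_smul, f1, smul_smul, act_smul, act_e1_gU,
      smul_smul]
    congr 1; ring
  have m1 : act e1 (x * g * x⁻¹ * gU) = (-(k' * k⁻¹)) • e1 := by
    rw [act_mul, act_mul, act_mul, e', act_smul, ← act_mul v g g, h2, act_one, act_smul, f7,
      smul_smul, act_smul, act_e7_gU, smul_smul]
    congr 1; ring
  obtain ⟨l, hl⟩ := stabG T hc (mul_mem (mul_mem (mul_mem hx hg) (inv_mem hx)) (gU_mem t))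
    (by simpa using ⟨hk', hk⟩) m1 m7
  refine ⟨l, x⁻¹, inv_mem hx, ?_⟩
  rw [← hl, mul_assoc _ gU gU, gU_gU]
  group

lemma cj_sq (t : ℕ) (e u : Fˣ) : Cj t (gH t (e * u * u) * gU) (gH t e * gU) := by
  refine ⟨gH t u, gH_mem t u, ?_⟩
  rw [mul_assoc, gU_gH, ← mul_assoc, gH_mul, ← mul_assoc, gH_mul, mul_inv_cancel_right, mul_comm]

lemma neg_one_dM {t : ℕ} (T : TF F t) : hmat t (-1 : Fˣ) = dM 1 (-1 : F) := by
  rw [hmat_eq]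
  obtain ⟨n, hn⟩ := T.odd
  have h1 : (-1 : Fˣ) ^ (1 - (t:ℤ)) = 1 := by
    apply Even.neg_one_zpow; exact ⟨-n, by omega⟩
  have h2 : (-1 : Fˣ) ^ (2 * (t:ℤ) - 1) = -1 := by
    apply Odd.neg_one_zpow; exact ⟨t - 1, by ring⟩
  rw [h1, h2]; simp

lemma va (v : Fin 7 → F) : v ᵥ* aM 1 1 = ![v 0, v 0 + v 1, v 1 + v 2, v 1 + v 2 + v 3,
    -v 0 - v 1 - v 2 + v 3 + v 4, -v 0 - v 4 + v 5, v 0 - v 1 + v 2 + v 4 - v 5 + v 6] := by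
  rw [vm]; ext j; fin_cases j <;> simp [aM] <;> ring
lemma vb (v : Fin 7 → F) : v ᵥ* bM 1 1 = ![v 0, v 1, v 2 - v 0, v 3 + v 1, v 4 - v 0,
    v 5 - v 1 + v 3, v 6 - v 0 + v 2 + v 4] := by
  rw [vm]; ext j; fin_cases j <;> simp [bM] <;> ring
lemma vc (v : Fin 7 → F) : v ᵥ* cM 1 1 = ![v 0, v 1, v 2, v 3 - v 0, v 4 - v 1,
    v 5 - v 0 + v 2, v 6 - v 0 + v 1 - v 3] := by
  rw [vm]; ext j; fin_cases j <;> simp [cM] <;> ring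
lemma vd (v : Fin 7 → F) : v ᵥ* dM 1 (-1) = ![-v 0, v 1, -v 2, v 3, -v 4, v 5, -v 6] := by
  rw [vm]; ext j; fin_cases j <;> simp [dM, inv_neg]
lemma vu (v : Fin 7 → F) : v ᵥ* ups = ![-v 6, -v 5, -v 4, -v 3, -v 2, -v 1, -v 0] := by
  rw [vm]; ext j; fin_cases j <;> simp [ups]

lemma ext_act {g h : GL (Fin 7) F} (H : ∀ v, act v g = act v h) : g = h := by
  apply Units.ext
  ext i j
  have := congrFun (H (Pi.single i 1)) j
  simpa [act] using this

lemma cj1 {t : ℕ} [CharP F 3] (T : TF F t) : Cj t (gH t (-1 : Fˣ)) gU := by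
  refine ⟨gA t 1 * gU * gB t 1 * gU * gC t 1, mul_mem (mul_mem (mul_mem (mul_mem (gA_mem t 1)
    (gU_mem t)) (gB_mem t 1)) (gU_mem t)) (gC_mem t 1), ext_act fun v => ?_⟩
  simp only [act_mul]
  simp only [act, gA_val, gB_val, gC_val, gH_val, gU_val, amat_eq, bmat_eq, cmat_eq, one_pow,
    neg_one_dM T, va, vb, vc, vd, vu]
  ext i
  fin_cases i <;> simp <;> grind

lemma cj2 {t : ℕ} [CharP F 3] (T : TF F t) : Cj t (gH t (-1 : Fˣ)) (gH t (-1 : Fˣ) * gU) := by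
  refine ⟨gC t 1 * gU * gB t 1 * gU * gA t 1, mul_mem (mul_mem (mul_mem (mul_mem (gC_mem t 1)
    (gU_mem t)) (gB_mem t 1)) (gU_mem t)) (gA_mem t 1), ext_act fun v => ?_⟩
  simp only [act_mul]
  simp only [act, gA_val, gB_val, gC_val, gH_val, gU_val, amat_eq, bmat_eq, cmat_eq, one_pow,
    neg_one_dM T, va, vb, vc, vd, vu]
  ext i
  fin_cases i <;> simp <;> grind

lemma cj_main {t : ℕ} [CharP F 3] (T : TF F t) (hc : Fintype.card F = 3*t*t)
    {g : GL (Fin 7) F} (hg : g ∈ ReeGroup (F := F) t) (h1 : g ≠ 1) (h2 : g * g = 1) :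
    Cj t g (gH t (-1 : Fˣ)) := by
  classical
  obtain ⟨l, hl⟩ := cj_swap T hc hg h1 h2
  refine hl.trans ?_
  have hns : ¬ IsSquare (-1 : F) := by
    rw [FiniteField.isSquare_neg_one_iff, hc]
    obtain ⟨n, rfl⟩ := T.odd
    have : 3 * (2*n+1) * (2*n+1) = 4 * (3*n*n+3*n) + 3 := by ring
    rw [this]; omega
  have hsq : IsSquare (l : F) ∨ IsSquare (-(l : F)) := by
    by_contra! H
    have a := quadraticChar_neg_one_iff_not_isSquare.2 H.1
    have b := quadraticChar_neg_one_iff_not_isSquare.2 H.2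
    have c := quadraticChar_neg_one_iff_not_isSquare.2 hns
    have : -(l:F) = -1 * l := by ring
    rw [this, map_mul, a, c] at b
    norm_num at b
  rcases hsq with ⟨u, hu⟩ | ⟨u, hu⟩
  · have u0 : u ≠ 0 := by rintro rfl; exact l.ne_zero (by simpa using hu)
    have e : l = 1 * Units.mk0 u u0 * Units.mk0 u u0 := by ext; simpa using hu
    rw [e]
    refine (cj_sq t 1 _).trans ?_
    rw [gH_one, one_mul]
    exact (cj1 T).symm
  · have u0 : u ≠ 0 := by rintro rfl; exact l.ne_zero (by simpa using hu)
    have e : l = -1 * Units.mk0 u u0 * Units.mk0 u u0 := by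
      ext; simp; linear_combination -hu
    rw [e]
    exact (cj_sq t (-1) _).trans (cj2 T).symm

end ReePaper

namespace ReePaper
variable {F : Type*} [Field F] [Fintype F]

lemma act_ne {v : Fin 7 → F} (hv : v ≠ 0) (g : GL (Fin 7) F) : act v g ≠ 0 := by
  intro h
  apply hv
  rw [← act_inv v g, h, act, Matrix.zero_vecMul]

lemma ptAct_mk (g : GL (Fin 7) F) (v : Fin 7 → F) (hv : v ≠ 0) :
    ptAct g (Projectivization.mk F v hv) = Projectivization.mk F (act v g) (act_ne hv g) := rfl

lemma ptAct_mul (g h : GL (Fin 7) F) (P : Projectivization F (Fin 7 → F)) :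
    ptAct (g * h) P = ptAct h (ptAct g P) := by
  induction P using Projectivization.ind with
  | h v hv =>
    simp only [ptAct_mk, act_mul]

lemma ptAct_one (P : Projectivization F (Fin 7 → F)) : ptAct 1 P = P := by
  induction P using Projectivization.ind with
  | h v hv =>
    simp only [ptAct_mk, act_one]

lemma ptAct_inj (g : GL (Fin 7) F) : Function.Injective (ptAct g) := by
  intro P Q h
  rw [← ptAct_one P, ← ptAct_one Q, ← mul_inv_cancel g, ptAct_mul, ptAct_mul, h]

lemma mk_eq_iff {v w : Fin 7 → F} (hv : v ≠ 0) (hw : w ≠ 0) :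
    Projectivization.mk F v hv = Projectivization.mk F w hw ↔ ∃ k : F, k ≠ 0 ∧ v = k • w := by
  rw [Projectivization.mk_eq_mk_iff']
  constructor
  · rintro ⟨a, rfl⟩
    exact ⟨a, fun h => hv (by rw [h, zero_smul]), rfl⟩
  · rintro ⟨k, -, rfl⟩
    exact ⟨k, rfl⟩

lemma mk_mem_Oset (t : ℕ) {v : Fin 7 → F} (hv : v ≠ 0) :
    Projectivization.mk F v hv ∈ Oset t ↔ InO t v := by
  unfold Oset InO
  refine or_congr ?_ ?_
  · rw [Set.mem_singleton_iff, Pinf, mk_eq_iff]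
  · simp only [Set.mem_setOf_eq, mk_eq_iff]
    constructor
    · rintro ⟨a, b, c, k, hk, h⟩; exact ⟨k, a, b, c, hk, h⟩
    · rintro ⟨k, a, b, c, hk, h⟩; exact ⟨a, b, c, k, hk, h⟩

lemma ptAct_mem {t : ℕ} [CharP F 3] (T : TF F t) {g : GL (Fin 7) F}
    (hg : g ∈ ReeGroup (F := F) t) {P : Projectivization F (Fin 7 → F)} (hP : P ∈ Oset t) :
    ptAct g P ∈ Oset t := by
  induction P using Projectivization.ind with
  | h v hv =>
    rw [mk_mem_Oset] at hP
    rw [ptAct_mk, mk_mem_Oset]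
    exact (ree_inv T hg).2 v hP

/-- Conjugate elements have the same number of fixed points. -/
lemma fix_conj {t : ℕ} [CharP F 3] (T : TF F t) {g h : GL (Fin 7) F} (H : Cj t g h) :
    {P ∈ Oset (F := F) t | ptAct g P = P}.ncard = {P ∈ Oset (F := F) t | ptAct h P = P}.ncard := by
  obtain ⟨x, hx, e⟩ := H
  rw [← Set.ncard_image_of_injective _ (ptAct_inj x)]
  congr 1
  ext P
  constructor
  · rintro ⟨Q, ⟨hQ, hf⟩, rfl⟩
    refine ⟨ptAct_mem T hx hQ, ?_⟩
    rw [← ptAct_mul, ← e, ptAct_mul, hf]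
  · rintro ⟨hP, hf⟩
    refine ⟨ptAct x⁻¹ P, ⟨ptAct_mem T (inv_mem hx) hP, ?_⟩, ?_⟩
    · apply ptAct_inj x
      rw [← ptAct_mul, e, ← ptAct_mul, ← ptAct_mul, ← mul_assoc, inv_mul_cancel, one_mul, hf,
        ptAct_one]
    · rw [← ptAct_mul, inv_mul_cancel, ptAct_one]

/-- The points fixed by `h(-1)`. -/
def fpt (t : ℕ) : Option F → Projectivization F (Fin 7 → F)
  | none => Pinf
  | some b => Projectivization.mk F (oVec t 0 b 0) (oVec_ne_zero t 0 b 0)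

lemma fpt_inj {t : ℕ} (T : TF F t) : Function.Injective (fpt (F := F) t) := by
  have key : ∀ b : F, Pinf ≠ Projectivization.mk F (oVec t 0 b 0) (oVec_ne_zero t 0 b 0) := by
    intro b h
    rw [Pinf, mk_eq_iff] at h
    obtain ⟨k, hk, h⟩ := h
    have h0 := congrFun h 0
    simp [oVec] at h0
    exact hk h0.symm
  rintro (_ | b) (_ | b') h
  · rfl
  · exact absurd h (key b')
  · exact absurd h.symm (key b)
  · simp only [fpt, mk_eq_iff] at h
    obtain ⟨k, hk, h⟩ := h
    have h0 := congrFun h 0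
    have h4 := congrFun h 4
    simp [oVec] at h0
    subst h0
    simp [oVec, T.ne] at h4
    rw [h4]

lemma fix_set {t : ℕ} [CharP F 3] (T : TF F t) :
    {P ∈ Oset (F := F) t | ptAct (gH t (-1 : Fˣ)) P = P} = Set.range (fpt (F := F) t) := by
  have hact : ∀ v : Fin 7 → F, act v (gH t (-1 : Fˣ)) =
      ![-v 0, v 1, -v 2, v 3, -v 4, v 5, -v 6] := by
    intro v
    rw [act, gH_val, neg_one_dM T, vd]
  have h3 : (3 : F) = 0 := by exact_mod_cast CharP.cast_eq_zero F 3
  have h2 : ∀ x : F, x = -x → x = 0 := by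
    intro x hx
    linear_combination (-1) * hx + x * h3
  ext P
  constructor
  · rintro ⟨hP | ⟨a, b, c, rfl⟩, hf⟩
    · exact ⟨none, hP.symm⟩
    · rw [ptAct_mk, mk_eq_iff] at hf
      obtain ⟨k, hk, h⟩ := hf
      rw [hact] at h
      have e0 := congrFun h 0
      have e1 := congrFun h 1
      have e3 := congrFun h 3
      simp [oVec] at e0 
      subst e0
      simp [oVec] at e1 e3
      have ha : a = 0 := by simpa [T.ne] using h2 _ e1
      subst ha
      have hc : c = 0 := by
        have := h2 (c ^ t) (by simpa [T.ne, neg_eq_iff_eq_neg] using e3)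
        simpa [T.ne] using this
      subst hc
      exact ⟨some b, rfl⟩
  · rintro ⟨_ | b, rfl⟩
    · refine ⟨Or.inl rfl, ?_⟩
      rw [fpt, Pinf, ptAct_mk, mk_eq_iff]
      refine ⟨-1, by simp, ?_⟩
      rw [hact]
      ext i; fin_cases i <;> simp
    · refine ⟨Or.inr ⟨0, b, 0, rfl⟩, ?_⟩
      rw [fpt, ptAct_mk, mk_eq_iff]
      refine ⟨-1, by simp, ?_⟩
      rw [hact]
      have := T.ne
      ext i; fin_cases i <;> simp [oVec, this]

lemma fix_card {t : ℕ} [CharP F 3] (T : TF F t) :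
    {P ∈ Oset (F := F) t | ptAct (gH t (-1 : Fˣ)) P = P}.ncard = Fintype.card F + 1 := by
  rw [fix_set T, ← Set.image_univ, Set.ncard_image_of_injective _ (fpt_inj T), Set.ncard_univ,
    Nat.card_eq_fintype_card, Fintype.card_option]

lemma charP3 {m : ℕ} (hF : Fintype.card F = 3 ^ (2 * m + 1)) : CharP F 3 := by
  haveI : Fact (Nat.Prime 3) := ⟨Nat.prime_three⟩
  exact charP_of_card_eq_prime_pow hF

lemma card3 {m : ℕ} (hF : Fintype.card F = 3 ^ (2 * m + 1)) :
    Fintype.card F = 3 * 3 ^ m * 3 ^ m := by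
  rw [hF]; ring

lemma tf3 {m : ℕ} (hm : 0 < m) (hF : Fintype.card F = 3 ^ (2 * m + 1)) : TF F (3 ^ m) := by
  haveI : Fact (Nat.Prime 3) := ⟨Nat.prime_three⟩
  haveI := charP3 hF
  refine ⟨fun x y => add_pow_char_pow x y 3 m, fun x => ?_, Odd.pow (by decide), ?_⟩
  · rw [← card3 hF, FiniteField.pow_card]
  · calc 3 = 3 ^ 1 := rfl
      _ ≤ 3 ^ m := Nat.pow_le_pow_right (by norm_num) hm

lemma inv_of_order {G : Type*} [Group G] {g : G} (h : orderOf g = 2) : g ≠ 1 ∧ g * g = 1 := by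
  constructor
  · rintro rfl; simp at h
  · rw [← pow_two, ← h, pow_orderOf_eq_one]

end ReePaper

open ReePaper

/-- All involutions of `Ree(q)` are conjugate in `Ree(q)`, and every involution fixes
exactly `q + 1` points of `O`. -/
theorem involutions_conjugate_and_fixed_points (m : ℕ) (hm : 0 < m) (F : Type*) [Field F] [Fintype F]
    (hF : Fintype.card F = 3 ^ (2 * m + 1)) :
    (∀ g₁ g₂ : GL (Fin 7) F, g₁ ∈ ReeGroup (F := F) (3 ^ m) → g₂ ∈ ReeGroup (F := F) (3 ^ m) →
      orderOf g₁ = 2 → orderOf g₂ = 2 →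
      ∃ x ∈ ReeGroup (F := F) (3 ^ m), x⁻¹ * g₁ * x = g₂) ∧
    (∀ g : GL (Fin 7) F, g ∈ ReeGroup (F := F) (3 ^ m) → orderOf g = 2 →
      {P ∈ Oset (F := F) (3 ^ m) | ptAct g P = P}.ncard = 3 ^ (2 * m + 1) + 1) := by
  haveI := charP3 hF
  have T := tf3 hm hF
  have hc := card3 hF
  have key : ∀ g : GL (Fin 7) F, g ∈ ReeGroup (F := F) (3 ^ m) → orderOf g = 2 →
      Cj (3 ^ m) g (gH (3 ^ m) (-1 : Fˣ)) := fun g hg ho =>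
    cj_main T hc hg (inv_of_order ho).1 (inv_of_order ho).2
  constructor
  · intro g₁ g₂ h₁ h₂ o₁ o₂
    obtain ⟨x, hx, e⟩ := (key g₁ h₁ o₁).trans (key g₂ h₂ o₂).symm
    exact ⟨x, hx, by rw [mul_assoc, e, inv_mul_cancel_left]⟩
  · intro g hg ho
    rw [fix_conj T (key g hg ho), fix_card T, hF]
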